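/- arXiv:2503.00316 — 3 statements merged into one kernel-verified Lean document; each statement's English description precedes it below -/
import Mathlib

section
/- Let X be a compact metric space, f : X → X a continuous map, and Λ ⊆ X a minimal set for f. If f is surjective and there exists x ∈ Λ such that V_ε^s(x) is dense in X for every ε > 0, then for every integer n with 2 ≤ n < |Λ| + 1 there exists δ_n > 0 such that DC1_n^{δ_n}(X,f) is a residual subset of X^n. -/
/-!
Being DC1-scrambled is generic as soon as, for each open condition `U ⊆ Xⁿ` involved, there is an
orbit in `Xⁿ` staying uniformly inside `U` whose stable balls are dense: tuples in a small such ball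
are in `U` at all but finitely many times, and "the proportion of visits to `U` up to some time
`m ≥ N` exceeds `r`", for `r < 1`, is an open condition.

For proximality take the orbit of the diagonal point `(x, …, x)`. For separation take the orbit of
`(x, f x, …, f^(n-1) x)`: its stable balls are dense because `f` maps dense sets to dense sets, and
its coordinates stay uniformly apart because they are distinct points of `Λ` moving inside `Λ`. They
are distinct since a point of period `p` in a minimal set forces the set to have at most `p`
points.
-/


open Filter Topology

/-- `V_ε^s(x)`: points whose forward orbit eventually stays ε-close (in limsup) to that of `x`. -/
def Vs {X : Type*} [MetricSpace X] (f : X → X) (x : X) (ε : ℝ) : Set X :=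
  {y | Filter.limsup (fun i : ℕ => dist (f^[i] x) (f^[i] y)) Filter.atTop ≤ ε}

open Classical in
/-- A DC1-`n`-`δ`-scrambled tuple. -/
def DC1Scrambled {X : Type*} [MetricSpace X] (f : X → X) {n : ℕ} (δ : ℝ)
    (x : Fin n → X) : Prop :=
  Filter.limsup (fun m : ℕ =>
      ((((Finset.range m).filter fun i => ∀ j k : Fin n, j < k →
        δ < dist (f^[i] (x j)) (f^[i] (x k))).card : ℝ) / m)) Filter.atTop = 1 ∧
  ∀ ε : ℝ, 0 < ε → Filter.limsup (fun m : ℕ =>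
      ((((Finset.range m).filter fun i => ∀ j k : Fin n, j < k →
        dist (f^[i] (x j)) (f^[i] (x k)) < ε).card : ℝ) / m)) Filter.atTop = 1

/-- `S` is a distal set for `f`. -/
def DistalSet {X : Type*} [MetricSpace X] (f : X → X) (S : Set X) : Prop :=
  ∀ n : ℕ, 2 ≤ n → ∀ x : Fin n → X, (∀ j, x j ∈ S) → Function.Injective x →
    ∃ c : ℝ, 0 < c ∧ ∀ i : ℕ, ∀ j k : Fin n, j < k → c ≤ dist (f^[i] (x j)) (f^[i] (x k))

/-- `f` restricted to `Λ` is minimal: `Λ` is the orbit closure of each of its points. -/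
def MinimalOn {X : Type*} [TopologicalSpace X] (f : X → X) (Λ : Set X) : Prop :=
  ∀ x ∈ Λ, closure (Set.range fun i : ℕ => f^[i] x) = Λ

/-- `f` restricted to `Λ` is equicontinuous. -/
def EquicontOnSet {X : Type*} [MetricSpace X] (f : X → X) (Λ : Set X) : Prop :=
  ∀ ε : ℝ, 0 < ε → ∃ δ : ℝ, 0 < δ ∧ ∀ x ∈ Λ, ∀ y ∈ Λ, dist x y ≤ δ →
    ∀ i : ℕ, dist (f^[i] x) (f^[i] y) ≤ ε

/-- Topological transitivity. -/
def IsTransitive {Z : Type*} [TopologicalSpace Z] (h : Z → Z) : Prop :=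
  ∀ U V : Set Z, IsOpen U → IsOpen V → U.Nonempty → V.Nonempty →
    ∃ i : ℕ, ∃ z ∈ U, h^[i] z ∈ V

/-- `N(x,ε)` : times at which the orbit of `x` returns ε-close to `x`. -/
def retTimes {X : Type*} [MetricSpace X] (f : X → X) (x : X) (ε : ℝ) : Set ℕ :=
  {i : ℕ | dist x (f^[i] x) ≤ ε}

/-- `R(f,𝓕)`: the set of `𝓕`-recurrent points. -/
def FRecurrent {X : Type*} [MetricSpace X] (f : X → X) (F : Set (Set ℕ)) : Set X :=
  {x | ∀ ε : ℝ, 0 < ε → retTimes f x ε ∈ F}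

/-- The dual family `𝓕*`. -/
def dualFamily (F : Set (Set ℕ)) : Set (Set ℕ) :=
  {A | ∀ B ∈ F, (A ∩ B).Nonempty}

/-- `Δ(A)`, the difference set of `A`. -/
def deltaSet (A : Set ℕ) : Set ℕ :=
  {i | ∃ j ∈ A, ∃ k ∈ A, j ≤ k ∧ i = k - j}

/-- `Δ(𝓕)`. -/
def deltaFamily (F : Set (Set ℕ)) : Set (Set ℕ) :=
  {B | ∃ A ∈ F, 0 ∈ A ∧ deltaSet A ⊆ B}

/-- `𝓕`-transitivity: `N(U,V) ∈ 𝓕` for all nonempty open `U, V`. -/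
def FTransitive {X : Type*} [TopologicalSpace X] (f : X → X) (F : Set (Set ℕ)) : Prop :=
  ∀ U V : Set X, IsOpen U → IsOpen V → U.Nonempty → V.Nonempty →
    {i : ℕ | ∃ x ∈ U, f^[i] x ∈ V} ∈ F

section Density

open Classical in
/-- The proportion of the times `i < m` that lie in `s`; it is `0` for `m = 0`. -/
noncomputable def frequency (s : Set ℕ) (m : ℕ) : ℝ :=
  (((Finset.range m).filter (· ∈ s)).card : ℝ) / m

/-- The upper asymptotic density of a set of times. -/
noncomputable def upperDensity (s : Set ℕ) : ℝ :=
  limsup (frequency s) atTop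

variable {s t : Set ℕ}

lemma frequency_nonneg (s : Set ℕ) (m : ℕ) : 0 ≤ frequency s m :=
  div_nonneg (Nat.cast_nonneg _) (Nat.cast_nonneg _)

lemma frequency_le_one (s : Set ℕ) (m : ℕ) : frequency s m ≤ 1 := by
  classical
  refine div_le_one_of_le₀ ?_ (Nat.cast_nonneg m)
  exact_mod_cast (Finset.card_filter_le _ _).trans (Finset.card_range m).le

lemma frequency_le_frequency {m : ℕ} (h : ∀ i < m, i ∈ s → i ∈ t) :
    frequency s m ≤ frequency t m := by
  classical
  have hsub : (Finset.range m).filter (· ∈ s) ⊆ (Finset.range m).filter (· ∈ t) := by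
    intro i
    simp only [Finset.mem_filter, Finset.mem_range]
    exact fun ⟨him, his⟩ => ⟨him, h i him his⟩
  unfold frequency
  gcongr

lemma tendsto_frequency_one (h : ∀ᶠ i in atTop, i ∈ s) : Tendsto (frequency s) atTop (𝓝 1) := by
  have hind : Tendsto (s.indicator (1 : ℕ → ℝ)) atTop (𝓝 1) :=
    tendsto_const_nhds.congr' (h.mono fun i hi => (Set.indicator_of_mem hi 1).symm)
  refine hind.cesaro.congr fun m => ?_
  rw [frequency, div_eq_inv_mul, Finset.card_filter]
  push_cast
  rfl

lemma upperDensity_eq_one_iff :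
    upperDensity s = 1 ↔ ∀ r < 1, ∃ᶠ m in atTop, r < frequency s m := by
  have hbdd : IsBoundedUnder (· ≤ ·) atTop (frequency s) :=
    isBoundedUnder_of ⟨1, frequency_le_one s⟩
  have hcobdd : IsCoboundedUnder (· ≤ ·) atTop (frequency s) :=
    isCoboundedUnder_le_of_le atTop (frequency_nonneg s)
  have hle : upperDensity s ≤ 1 := limsup_le_of_le hcobdd (.of_forall (frequency_le_one s))
  rw [← le_limsup_iff hcobdd hbdd]
  exact ⟨fun h => h.ge, hle.antisymm⟩

lemma upperDensity_eq_one_of_subset (hst : s ⊆ t) (hs : upperDensity s = 1) :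
    upperDensity t = 1 :=
  upperDensity_eq_one_iff.2 fun r hr => (upperDensity_eq_one_iff.1 hs r hr).mono fun _ hm =>
    hm.trans_le (frequency_le_frequency fun _ _ hi => hst hi)

end Density

section Generic

variable {Z : Type*} [TopologicalSpace Z] {O : ℕ → Set Z}

lemma isOpen_setOf_lt_frequency (hO : ∀ i, IsOpen (O i)) (r : ℝ) (m : ℕ) :
    IsOpen {z | r < frequency {i | z ∈ O i} m} := by
  refine isOpen_iff_mem_nhds.2 fun z hz => ?_
  have hvisits : ∀ᶠ w in 𝓝 z, ∀ i < m, z ∈ O i → w ∈ O i :=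
    (Set.finite_lt_nat m).eventually_all.2 fun i _ =>
      eventually_imp_distrib_left.2 fun hi => (hO i).mem_nhds hi
  exact hvisits.mono fun w hw => lt_of_lt_of_le hz (frequency_le_frequency hw)

lemma eventually_residual_frequently_lt_frequency (hO : ∀ i, IsOpen (O i))
    (hd : Dense {z | ∀ᶠ i in atTop, z ∈ O i}) {r : ℝ} (hr : r < 1) :
    ∀ᶠ z in residual Z, ∃ᶠ m in atTop, r < frequency {i | z ∈ O i} m := by
  simp only [frequently_atTop, eventually_countable_forall]
  intro N
  have hopen : IsOpen (⋃ m ≥ N, {z | r < frequency {i | z ∈ O i} m}) :=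
    isOpen_biUnion fun m _ => isOpen_setOf_lt_frequency hO r m
  have hdense : Dense (⋃ m ≥ N, {z | r < frequency {i | z ∈ O i} m}) := hd.mono fun z hz => by
    obtain ⟨m, hmN, hm⟩ :=
      frequently_atTop.1 ((tendsto_frequency_one hz).eventually_const_lt hr).frequently N
    exact Set.mem_biUnion hmN hm
  filter_upwards [residual_of_dense_open hopen hdense] with z hz
  simpa using hz

lemma eventually_residual_upperDensity_eq_one (hO : ∀ i, IsOpen (O i))
    (hd : Dense {z | ∀ᶠ i in atTop, z ∈ O i}) :
    ∀ᶠ z in residual Z, upperDensity {i | z ∈ O i} = 1 := by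
  have hrat : ∀ᶠ z in residual Z, ∀ q : ℚ, (q : ℝ) < 1 →
      ∃ᶠ m in atTop, (q : ℝ) < frequency {i | z ∈ O i} m :=
    eventually_countable_forall.2 fun q => eventually_imp_distrib_left.2 fun hq =>
      eventually_residual_frequently_lt_frequency hO hd hq
  filter_upwards [hrat] with z hz
  refine upperDensity_eq_one_iff.2 fun r hr => ?_
  obtain ⟨q, hrq, hq⟩ := exists_rat_btwn hr
  exact (hz q hq).mono fun m hm => hrq.trans hm

end Generic

section StableBall

/-- The points whose forward orbit is eventually within `ε` of the orbit of `x`. Unlike `Vs f x ε`,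
it does not refer to a real `limsup`, which is a junk value when the distances are unbounded. -/
def stableBall {X : Type*} [PseudoMetricSpace X] (f : X → X) (x : X) (ε : ℝ) : Set X :=
  {y | ∀ᶠ i in atTop, dist (f^[i] y) (f^[i] x) < ε}

lemma Vs_subset_stableBall {X : Type*} [MetricSpace X] [BoundedSpace X] (f : X → X) (x : X)
    {ε ε' : ℝ} (h : ε < ε') : Vs f x ε ⊆ stableBall f x ε' := by
  intro y hy
  have hbdd : IsBoundedUnder (· ≤ ·) atTop fun i : ℕ => dist (f^[i] x) (f^[i] y) :=
    isBoundedUnder_of ⟨Metric.diam Set.univ, fun i =>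
      Metric.dist_le_diam_of_mem (Bornology.IsBounded.all _) (Set.mem_univ _) (Set.mem_univ _)⟩
  filter_upwards [eventually_lt_of_limsup_lt (lt_of_le_of_lt hy h) hbdd] with i hi
  rwa [dist_comm]

variable {X : Type*} [PseudoMetricSpace X] {f : X → X} {ε : ℝ}

lemma dense_stableBall_iterate (hf : Continuous f) (hrange : DenseRange f) {x : X}
    (h : Dense (stableBall f x ε)) (j : ℕ) : Dense (stableBall f (f^[j] x) ε) := by
  induction j with
  | zero => exact h
  | succ j ih =>
    refine (hrange.dense_image hf ih).mono ?_
    rintro _ ⟨y, hy, rfl⟩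
    filter_upwards [(tendsto_add_atTop_nat 1).eventually hy] with i hi
    simpa only [← Function.iterate_succ_apply f i, Function.iterate_succ_apply' f j] using hi

lemma dense_stableBall_piMap {ι : Type*} [Fintype ι] {Y : ι → Type*}
    [∀ j, PseudoMetricSpace (Y j)] {g : ∀ j, Y j → Y j} {a : ∀ j, Y j} (hε : 0 < ε)
    (h : ∀ j, Dense (stableBall (g j) (a j) ε)) : Dense (stableBall (Pi.map g) a ε) := by
  refine (dense_pi Set.univ fun j _ => h j).mono fun y hy => ?_
  filter_upwards [eventually_all.2 fun j => hy j (Set.mem_univ j)] with i hi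
  simpa only [Pi.map_iterate, Pi.map_apply, dist_pi_lt_iff hε] using hi

lemma eventually_residual_upperDensity_visits_eq_one (hf : Continuous f) {U : Set X}
    (hU : IsOpen U) {a : X} (hd : Dense (stableBall f a ε))
    (hball : ∀ i, Metric.ball (f^[i] a) ε ⊆ U) :
    ∀ᶠ y in residual X, upperDensity {i | f^[i] y ∈ U} = 1 :=
  eventually_residual_upperDensity_eq_one (O := fun i => f^[i] ⁻¹' U)
    (fun i => hU.preimage (hf.iterate i)) (hd.mono fun _ hy => hy.mono fun i hi => hball i hi)

end StableBall

section Tuples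

variable {X : Type*} [PseudoMetricSpace X] {ι : Type*} [LT ι]

/-- The tuples whose entries are pairwise more than `δ` apart, the pairs being indexed by `j < k` as
in `DC1Scrambled`. -/
def separatedTuples (X ι : Type*) [PseudoMetricSpace X] [LT ι] (δ : ℝ) : Set (ι → X) :=
  {y | ∀ j k, j < k → δ < dist (y j) (y k)}

/-- The tuples whose entries are pairwise less than `ε` apart, the pairs being indexed by `j < k` as
in `DC1Scrambled`. -/
def proximalTuples (X ι : Type*) [PseudoMetricSpace X] [LT ι] (ε : ℝ) : Set (ι → X) :=
  {y | ∀ j k, j < k → dist (y j) (y k) < ε}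

lemma isOpen_separatedTuples [Finite ι] (δ : ℝ) : IsOpen (separatedTuples X ι δ) := by
  simp only [separatedTuples, Set.ofPred_forall]
  exact isOpen_iInter_of_finite fun j => isOpen_iInter_of_finite fun k =>
    isOpen_iInter_of_finite fun _ => isOpen_lt continuous_const (by fun_prop)

lemma isOpen_proximalTuples [Finite ι] (ε : ℝ) : IsOpen (proximalTuples X ι ε) := by
  simp only [proximalTuples, Set.ofPred_forall]
  exact isOpen_iInter_of_finite fun j => isOpen_iInter_of_finite fun k =>
    isOpen_iInter_of_finite fun _ => isOpen_lt (by fun_prop) continuous_const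

lemma ball_subset_separatedTuples [Fintype ι] {c δ : ℝ} {a : ι → X}
    (ha : ∀ j k, j < k → c ≤ dist (a j) (a k)) :
    Metric.ball a ((c - δ) / 2) ⊆ separatedTuples X ι δ := by
  intro y hy j k hjk
  have hj : dist (y j) (a j) < (c - δ) / 2 := (dist_le_pi_dist y a j).trans_lt hy
  have hk : dist (y k) (a k) < (c - δ) / 2 := (dist_le_pi_dist y a k).trans_lt hy
  have htri := dist_triangle4_right (a j) (a k) (y j) (y k)
  rw [dist_comm (a j) (y j), dist_comm (a k) (y k)] at htri
  linarith [ha j k hjk]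

lemma ball_const_subset_proximalTuples [Fintype ι] (x : X) (ε : ℝ) :
    Metric.ball (fun _ : ι => x) (ε / 2) ⊆ proximalTuples X ι ε := by
  intro y hy j k _
  have hj : dist (y j) x < ε / 2 := (dist_le_pi_dist y _ j).trans_lt hy
  have hk : dist (y k) x < ε / 2 := (dist_le_pi_dist y _ k).trans_lt hy
  linarith [dist_triangle_right (y j) (y k) x]

variable [Finite ι] {f : X → X}

lemma eventually_residual_upperDensity_separatedTuples_eq_one (hf : Continuous f) {a : ι → X}
    (hd : ∀ ε > 0, ∀ j, Dense (stableBall f (a j) ε)) {c δ : ℝ} (hδ : δ < c)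
    (hsep : ∀ i j k, j < k → c ≤ dist (f^[i] (a j)) (f^[i] (a k))) :
    ∀ᶠ y in residual (ι → X),
      upperDensity {i | (Pi.map fun _ => f)^[i] y ∈ separatedTuples X ι δ} = 1 := by
  cases nonempty_fintype ι
  have hε : 0 < (c - δ) / 2 := half_pos (sub_pos.2 hδ)
  refine eventually_residual_upperDensity_visits_eq_one (.piMap fun _ => hf)
    (isOpen_separatedTuples δ) (dense_stableBall_piMap hε (hd _ hε)) fun i => ?_
  rw [Pi.map_iterate]
  exact ball_subset_separatedTuples (hsep i)

lemma eventually_residual_upperDensity_proximalTuples_eq_one (hf : Continuous f) {x : X}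
    (hd : ∀ ε > 0, Dense (stableBall f x ε)) :
    ∀ᶠ y in residual (ι → X), ∀ ε > 0,
      upperDensity {i | (Pi.map fun _ => f)^[i] y ∈ proximalTuples X ι ε} = 1 := by
  cases nonempty_fintype ι
  have hcountable : ∀ᶠ y in residual (ι → X), ∀ q : ℕ,
      upperDensity {i | (Pi.map fun _ => f)^[i] y ∈ proximalTuples X ι (1 / (q + 1))} = 1 := by
    refine eventually_countable_forall.2 fun q => ?_
    have hε : (0 : ℝ) < 1 / (q + 1) / 2 := by positivity
    refine eventually_residual_upperDensity_visits_eq_one (.piMap fun _ => hf)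
      (isOpen_proximalTuples _) (dense_stableBall_piMap hε fun _ => hd _ hε) fun i => ?_
    rw [Pi.map_iterate]
    exact ball_const_subset_proximalTuples (f^[i] x) _
  filter_upwards [hcountable] with y hy ε hε
  obtain ⟨q, hq⟩ := exists_nat_one_div_lt hε
  exact upperDensity_eq_one_of_subset (fun i hi j k hjk => (hi j k hjk).trans hq) (hy q)

end Tuples

lemma dc1Scrambled_iff {X : Type*} [MetricSpace X] {f : X → X} {n : ℕ} {δ : ℝ} {x : Fin n → X} :
    DC1Scrambled f δ x ↔
      upperDensity {i | (Pi.map fun _ => f)^[i] x ∈ separatedTuples X (Fin n) δ} = 1 ∧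
      ∀ ε > 0, upperDensity {i | (Pi.map fun _ => f)^[i] x ∈ proximalTuples X (Fin n) ε} = 1 := by
  unfold DC1Scrambled upperDensity frequency
  simp only [Pi.map_iterate, separatedTuples, proximalTuples, Set.mem_ofPred_eq, Pi.map_apply]

section Minimal

lemma exists_pos_forall_le_dist {Y X ι : Type*} [TopologicalSpace Y] [MetricSpace X] [Finite ι]
    {K : Set Y} (hK : IsCompact K) {g : ι → Y → X} (hg : ∀ j, ContinuousOn (g j) K)
    (hinj : ∀ y ∈ K, Function.Injective fun j => g j y) :
    ∃ c > 0, ∀ y ∈ K, ∀ j k, j ≠ k → c ≤ dist (g j y) (g k y) := by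
  have hpair (j k : ι) (hjk : j ≠ k) :
      ∀ᶠ c in 𝓝[>] (0 : ℝ), ∀ y ∈ K, c ≤ dist (g j y) (g k y) := by
    obtain ⟨b, hb, hle⟩ := hK.exists_forall_le'
      (continuous_dist.comp_continuousOn ((hg j).prodMk (hg k)))
      fun y hy => dist_pos.2 ((hinj y hy).ne hjk)
    filter_upwards [Ioo_mem_nhdsGT hb] with c hc y hy
    exact hc.2.le.trans (hle y hy)
  have hall : ∀ᶠ c in 𝓝[>] (0 : ℝ), ∀ j k, j ≠ k → ∀ y ∈ K, c ≤ dist (g j y) (g k y) := by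
    simpa only [eventually_all, eventually_imp_distrib_left] using hpair
  obtain ⟨c, hc, hpos⟩ := (hall.and self_mem_nhdsWithin).exists
  exact ⟨c, hpos, fun y hy j k hjk => hc j k hjk y hy⟩

namespace MinimalOn

variable {X : Type*} {f : X → X} {Λ : Set X} {z : X}

lemma iterate_mem [TopologicalSpace X] (hmin : MinimalOn f Λ) (hz : z ∈ Λ) (i : ℕ) :
    f^[i] z ∈ Λ :=
  (hmin z hz).subset (subset_closure ⟨i, rfl⟩)

lemma mk_le_of_isPeriodicPt [TopologicalSpace X] [T1Space X] (hmin : MinimalOn f Λ) (hz : z ∈ Λ)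
    {p : ℕ} (hp : 0 < p) (hper : Function.IsPeriodicPt f p z) : Cardinal.mk Λ ≤ p := by
  have hrange : (Set.range fun i : ℕ => f^[i] z) ⊆ Set.range fun i : Fin p => f^[i] z := by
    rintro _ ⟨i, rfl⟩
    exact ⟨⟨i % p, Nat.mod_lt i hp⟩, hper.iterate_mod_apply i⟩
  have hΛ : Λ ⊆ Set.range fun i : Fin p => f^[i] z :=
    (hmin z hz).symm.subset.trans (closure_minimal hrange (Set.finite_range _).isClosed)
  calc Cardinal.mk Λ ≤ Cardinal.mk (Set.range fun i : Fin p => f^[i] z) :=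
        Cardinal.mk_le_mk_of_subset hΛ
    _ ≤ p := by simpa using Cardinal.mk_range_le_lift (f := fun i : Fin p => f^[i] z)

lemma injective_iterate [TopologicalSpace X] [T1Space X] (hmin : MinimalOn f Λ) (hz : z ∈ Λ)
    {n : ℕ} (hn : (n : Cardinal) ≤ Cardinal.mk Λ) :
    Function.Injective fun j : Fin n => f^[j] z := by
  refine Function.Injective.of_lt_imp_ne fun j k hjk heq => ?_
  have hper : Function.IsPeriodicPt f (k - j) (f^[j] z) := by
    rw [Function.IsPeriodicPt, Function.IsFixedPt, ← Function.iterate_add_apply,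
      Nat.sub_add_cancel hjk.le]
    exact heq.symm
  have hle : n ≤ (k : ℕ) - j := by
    exact_mod_cast hn.trans
      (hmin.mk_le_of_isPeriodicPt (hmin.iterate_mem hz j) (Nat.sub_pos_of_lt hjk) hper)
  omega

lemma exists_pos_forall_le_dist_iterate [MetricSpace X] (hmin : MinimalOn f Λ)
    (hf : Continuous f) (hΛ : IsCompact Λ) {n : ℕ} (hn : (n : Cardinal) ≤ Cardinal.mk Λ) :
    ∃ c > 0, ∀ z ∈ Λ, ∀ j k : Fin n, j ≠ k → c ≤ dist (f^[j] z) (f^[k] z) :=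
  exists_pos_forall_le_dist hΛ (fun j => (hf.iterate j).continuousOn)
    fun _ hz => hmin.injective_iterate hz hn

end MinimalOn

end Minimal

theorem dc1_of_minimal_surjective_general {X : Type*} [MetricSpace X] {f : X → X}
    (hf : Continuous f) (hrange : DenseRange f) {Λ : Set X} (hΛ : IsCompact Λ)
    (hmin : MinimalOn f Λ) {x : X} (hx : x ∈ Λ) (hdense : ∀ ε > 0, Dense (stableBall f x ε))
    {n : ℕ} (hn : (n : Cardinal) ≤ Cardinal.mk Λ) :
    ∃ δ > 0, ∀ᶠ y : Fin n → X in residual (Fin n → X), DC1Scrambled f δ y := by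
  obtain ⟨c, hc, hsep⟩ := hmin.exists_pos_forall_le_dist_iterate hf hΛ hn
  have horbit (i : ℕ) (j k : Fin n) (hjk : j < k) :
      c ≤ dist (f^[i] (f^[j] x)) (f^[i] (f^[k] x)) := by
    simpa only [← Function.iterate_add_apply, add_comm] using
      hsep (f^[i] x) (hmin.iterate_mem hx i) j k hjk.ne
  refine ⟨c / 2, half_pos hc, ?_⟩
  filter_upwards [
    eventually_residual_upperDensity_separatedTuples_eq_one (a := fun j : Fin n => f^[j] x) hf
      (fun ε hε j => dense_stableBall_iterate hf hrange (hdense ε hε) j) (half_lt_self hc) horbit,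
    eventually_residual_upperDensity_proximalTuples_eq_one hf hdense] with y hsep hprox
  exact dc1Scrambled_iff.2 ⟨hsep, hprox⟩

/-- Corollary of Lemma 1.1: if `Λ` is a minimal set for a surjective `f` and
some `x ∈ Λ` has all `V_ε^s(x)` dense, then for each `2 ≤ n < |Λ| + 1` the set of
DC1-`n`-`δₙ`-scrambled tuples is residual in `Xⁿ` for some `δₙ > 0`. -/
theorem dc1_of_minimal_surjective {X : Type*} [MetricSpace X] [CompactSpace X]
    (f : X → X) (hf : Continuous f) (Λ : Set X)
    (hclosed : IsClosed Λ) (hinv : Set.MapsTo f Λ Λ) (hmin : MinimalOn f Λ)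
    (hsurj : Function.Surjective f)
    (hdense : ∃ x ∈ Λ, ∀ ε : ℝ, 0 < ε → Dense (Vs f x ε)) :
    ∀ n : ℕ, 2 ≤ n → (n : Cardinal) < Cardinal.mk Λ + 1 →
      ∃ δ : ℝ, 0 < δ ∧ {x : Fin n → X | DC1Scrambled f δ x} ∈ residual (Fin n → X) := by
  obtain ⟨x, hx, hV⟩ := hdense
  exact fun n _ hn => dc1_of_minimal_surjective_general hf hsurj.denseRange hclosed.isCompact
    hmin hx (fun ε hε => (hV (ε / 2) (half_pos hε)).mono <|
      Vs_subset_stableBall f x (half_lt_self hε))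
    (Order.lt_succ_iff.1 (hn.trans_le (Cardinal.add_one_le_of_lt (Order.lt_succ _))))
end

section
/- Let X be a compact metric space, f : X → X a continuous map, and Λ ⊆ X a closed f-invariant subset such that f|_Λ : Λ → Λ is minimal and equicontinuous. For any x ∈ Λ and ε > 0, if the closure of V_ε^s(x) has non-empty interior, and if the product map f|_Λ × f : Λ × X → Λ × X is transitive, then V_{2ε}^s(x) is dense in X. -/
/-!
A common hitting time of `f|_Λ × f` moves the open set `interior (closure (V_ε^s(x)))` into any
prescribed open set `O`, while some point near `x` returns near `x`. By equicontinuity at `x`,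
that return forces the whole orbits of `x` and `f^i(x)` to stay `η`-close. So `f^i` sends some
point of `V_ε^s(x)` into `O` at the cost of enlarging the tolerance from `ε` to `ε + η`.
-/

open Filter Topology

section BoundedDist

variable {X ι : Type*} [PseudoMetricSpace X] {l : Filter ι} {u v : ι → X}

lemma isBoundedUnder_le_dist [BoundedSpace X] :
    IsBoundedUnder (· ≤ ·) l fun i => dist (u i) (v i) :=
  isBoundedUnder_of ⟨Metric.diam (Set.univ : Set X), fun _ =>
    Metric.dist_le_diam_of_mem (Bornology.IsBounded.all _) (Set.mem_univ _) (Set.mem_univ _)⟩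

lemma isBoundedUnder_ge_dist : IsBoundedUnder (· ≥ ·) l fun i => dist (u i) (v i) :=
  isBoundedUnder_of ⟨0, fun _ => dist_nonneg⟩

lemma isCoboundedUnder_le_dist [l.NeBot] :
    IsCoboundedUnder (· ≤ ·) l fun i => dist (u i) (v i) :=
  isBoundedUnder_ge_dist.isCoboundedUnder_le

end BoundedDist

section TrackingSets

variable {X : Type*} [MetricSpace X] {f : X → X} {x y z : X} {ε η : ℝ}

lemma mem_Vs_of_forall_dist_iterate_le (h : ∀ i : ℕ, dist (f^[i] x) (f^[i] y) ≤ ε) :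
    y ∈ Vs f x ε :=
  limsup_le_of_le isCoboundedUnder_le_dist (.of_forall h)

lemma iterate_mem_Vs_iterate_iff (i : ℕ) : f^[i] y ∈ Vs f (f^[i] x) ε ↔ y ∈ Vs f x ε := by
  simp only [Vs, Set.mem_ofPred_eq, ← Function.iterate_add_apply]
  rw [limsup_nat_add (fun j => dist (f^[j] x) (f^[j] y)) i]

lemma mem_Vs_add [BoundedSpace X] (hxy : y ∈ Vs f x ε) (hyz : z ∈ Vs f y η) :
    z ∈ Vs f x (ε + η) := by
  set a := fun i : ℕ => dist (f^[i] x) (f^[i] y)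
  set b := fun i : ℕ => dist (f^[i] y) (f^[i] z)
  calc limsup (fun i : ℕ => dist (f^[i] x) (f^[i] z)) atTop
    _ ≤ limsup (a + b) atTop :=
        limsup_le_limsup (.of_forall fun _ => dist_triangle _ _ _)
          isCoboundedUnder_le_dist
          (isBoundedUnder_le_add isBoundedUnder_le_dist isBoundedUnder_le_dist)
    _ ≤ limsup a atTop + limsup b atTop :=
        limsup_add_le isBoundedUnder_ge_dist isBoundedUnder_le_dist
          isCoboundedUnder_le_dist isBoundedUnder_le_dist
    _ ≤ ε + η := add_le_add hxy hyz

end TrackingSets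

lemma EquicontOnSet.equicontinuous_restrict {X : Type*} [MetricSpace X] {f : X → X} {Λ : Set X}
    (heq : EquicontOnSet f Λ) (hinv : Set.MapsTo f Λ Λ) :
    Equicontinuous fun n : ℕ => (hinv.restrict f Λ Λ)^[n] := by
  intro x
  refine Metric.equicontinuousAt_iff.2 fun ε hε => ?_
  obtain ⟨δ, hδ, hclose⟩ := heq (ε / 2) (half_pos hε)
  refine ⟨δ, hδ, fun y hyx n => ?_⟩
  rw [Subtype.dist_eq, hinv.iterate_restrict]
  exact (hclose x x.2 y y.2 (dist_comm y x ▸ hyx.le) n).trans_lt (half_lt_self hε)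

/-- If `z` starts and returns near `x`, then `f^i(x)` is near `f^i(z)`, hence near `x`. -/
lemma exists_mem_nhds_orbit_mem_of_return {Y : Type*} [UniformSpace Y] {g : Y → Y} {x : Y}
    (heq : EquicontinuousAt (fun n : ℕ => g^[n]) x) {E : SetRel Y Y} (hE : E ∈ uniformity Y) :
    ∃ W ∈ 𝓝 x, ∀ z ∈ W, ∀ i, g^[i] z ∈ W → ∀ j, (g^[j] x, g^[j] (g^[i] x)) ∈ E := by
  obtain ⟨D, hD, hDE⟩ := UniformSpace.mem_nhds_iff.1 (heq E hE)
  obtain ⟨S, hS, hS_symm, hSD⟩ := comp_symm_mem_uniformity_sets hD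
  refine ⟨_, inter_mem (UniformSpace.ball_mem_nhds x hS) (heq S hS), ?_⟩
  rintro z ⟨-, hz⟩ i ⟨hiz, -⟩
  have hxi : (x, g^[i] x) ∈ D := hSD ⟨g^[i] z, hiz, hS_symm.symm _ _ (hz i)⟩
  exact hDE hxi

lemma IsTransitive.exists_common_hitting_time {Y X : Type*} [TopologicalSpace Y]
    [TopologicalSpace X] {g : Y → Y} {f : X → X} (htrans : IsTransitive (Prod.map g f))
    {W W' : Set Y} {U U' : Set X} (hW : IsOpen W) (hW' : IsOpen W') (hU : IsOpen U)
    (hU' : IsOpen U') (hW_ne : W.Nonempty) (hW'_ne : W'.Nonempty) (hU_ne : U.Nonempty)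
    (hU'_ne : U'.Nonempty) :
    ∃ i : ℕ, (∃ w ∈ W, g^[i] w ∈ W') ∧ ∃ u ∈ U, f^[i] u ∈ U' := by
  obtain ⟨i, ⟨w, u⟩, ⟨hw, hu⟩, hiwu⟩ := htrans (W ×ˢ U) (W' ×ˢ U') (hW.prod hU) (hW'.prod hU')
    (hW_ne.prod hU_ne) (hW'_ne.prod hU'_ne)
  rw [Prod.map_iterate] at hiwu
  exact ⟨i, ⟨w, hw, hiwu.1⟩, u, hu, hiwu.2⟩

lemma IsTransitive.exists_hitting_time_orbit_mem {Y X : Type*} [UniformSpace Y]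
    [TopologicalSpace X] {g : Y → Y} {f : X → X} (htrans : IsTransitive (Prod.map g f)) {x : Y}
    (heq : EquicontinuousAt (fun n : ℕ => g^[n]) x) {E : SetRel Y Y} (hE : E ∈ uniformity Y)
    {U U' : Set X} (hU : IsOpen U) (hU' : IsOpen U') (hU_ne : U.Nonempty) (hU'_ne : U'.Nonempty) :
    ∃ i : ℕ, (∀ j, (g^[j] x, g^[j] (g^[i] x)) ∈ E) ∧ ∃ u ∈ U, f^[i] u ∈ U' := by
  obtain ⟨W, hW, hreturn⟩ := exists_mem_nhds_orbit_mem_of_return heq hE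
  have hW_ne : (interior W).Nonempty := ⟨x, mem_interior_iff_mem_nhds.2 hW⟩
  obtain ⟨i, ⟨w, hw, hiw⟩, hhit⟩ := htrans.exists_common_hitting_time isOpen_interior
    isOpen_interior hU hU' hW_ne hW_ne hU_ne hU'_ne
  exact ⟨i, hreturn w (interior_subset hw) i (interior_subset hiw), hhit⟩

theorem dense_of_interior_nonempty_general {X : Type*} [MetricSpace X] [BoundedSpace X]
    {f : X → X} (hf : Continuous f) {Λ : Set X} (hinv : Set.MapsTo f Λ Λ) {x : Λ}
    (heq : EquicontinuousAt (fun n : ℕ => (hinv.restrict f Λ Λ)^[n]) x) {ε η : ℝ} (hη : 0 < η)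
    (hint : (interior (closure (Vs f x ε))).Nonempty)
    (htrans : IsTransitive (Prod.map (hinv.restrict f Λ Λ) f)) :
    Dense (Vs f x (η + ε)) := by
  refine dense_iff_inter_open.2 fun O hO hO_ne => ?_
  obtain ⟨i, horbit, u, hu, hiu⟩ := htrans.exists_hitting_time_orbit_mem heq
    (Metric.dist_mem_uniformity hη) isOpen_interior hO hint hO_ne
  have hix : f^[i] x ∈ Vs f x η := mem_Vs_of_forall_dist_iterate_le fun j => by
    have hj : dist _ _ < η := horbit j
    simp only [Subtype.dist_eq, hinv.iterate_restrict] at hj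
    exact hj.le
  obtain ⟨y, hyO, hy⟩ : ∃ y, f^[i] y ∈ O ∧ y ∈ Vs f x ε :=
    mem_closure_iff.1 (interior_subset hu) _ (hO.preimage (hf.iterate i)) hiu
  exact ⟨f^[i] y, hyO, mem_Vs_add hix ((iterate_mem_Vs_iterate_iff i).2 hy)⟩

/-- Lemma 2.3: with `f|_Λ` minimal and equicontinuous, if the closure of
`V_ε^s(x)` has nonempty interior for some `x ∈ Λ`, and `f|_Λ × f` is transitive, then
`V_{2ε}^s(x)` is dense. -/
theorem dense_of_interior_nonempty {X : Type*} [MetricSpace X] [CompactSpace X]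
    (f : X → X) (hf : Continuous f) (Λ : Set X)
    (hclosed : IsClosed Λ) (hinv : Set.MapsTo f Λ Λ)
    (hmin : MinimalOn f Λ) (heq : EquicontOnSet f Λ)
    (x : X) (hx : x ∈ Λ) (ε : ℝ) (hε : 0 < ε)
    (hint : (interior (closure (Vs f x ε))).Nonempty)
    (htrans : IsTransitive (Prod.map (Set.MapsTo.restrict f Λ Λ hinv) f)) :
    Dense (Vs f x (2 * ε)) := by
  rw [two_mul]
  exact dense_of_interior_nonempty_general hf hinv (heq.equicontinuous_restrict hinv ⟨x, hx⟩)
    hε hint htrans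
end

section
/- Let X be a compact metric space and f : X → X a minimal continuous map. Then for every x ∈ X, the forward orbit {f^i(x) : i ≥ 0} is a distal set for f. -/
/-!
The fixed points of `f^[p]` form a closed set containing the whole orbit of each of its points, so
for a minimal `f` a single one forces `f^[p]` to be the identity. Two distinct points of an orbit
can be written `y` and `f^[p] y`, hence `f^[p]` has no fixed point, and by compactness the
displacement `dist z (f^[p] z)` is at least some `c > 0` for all `z`. Evaluating at `z = f^[i] y`
keeps the orbits of `y` and `f^[p] y` at distance at least `c`. All of this takes place in a compact
forward invariant set `K`, as soon as a fixed point of `f^[p]` in `K` forces `x` to be fixed.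
-/

open Filter Topology

/-- `y` and `z` form a distal pair for `f`: their simultaneous forward iterates stay uniformly
apart. The infimum condition is encoded by a positive lower bound, as in `DistalSet`. -/
def DistalPair {X : Type*} [PseudoMetricSpace X] (f : X → X) (y z : X) : Prop :=
  ∃ c : ℝ, 0 < c ∧ ∀ i : ℕ, c ≤ dist (f^[i] y) (f^[i] z)

namespace DistalPair

variable {X : Type*} [PseudoMetricSpace X] {f : X → X} {y z : X}

theorem symm (h : DistalPair f y z) : DistalPair f z y := by
  simpa only [DistalPair, dist_comm] using h

theorem eventually_le_dist (h : DistalPair f y z) :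
    ∀ᶠ c in 𝓝[>] (0 : ℝ), ∀ i : ℕ, c ≤ dist (f^[i] y) (f^[i] z) := by
  obtain ⟨c, hc, hle⟩ := h
  filter_upwards [Ioo_mem_nhdsGT hc] with c' hc' i
  exact hc'.2.le.trans (hle i)

end DistalPair

theorem DistalSet.of_pairwise {X : Type*} [MetricSpace X] {f : X → X} {S : Set X}
    (hS : S.Pairwise (DistalPair f)) : DistalSet f S := by
  intro n _ x hx hinj
  have hsmall : ∀ᶠ c in 𝓝[>] (0 : ℝ),
      ∀ j k : Fin n, j < k → ∀ i : ℕ, c ≤ dist (f^[i] (x j)) (f^[i] (x k)) := by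
    simp only [eventually_all]
    exact fun j k hjk => (hS (hx j) (hx k) (hinj.ne hjk.ne)).eventually_le_dist
  obtain ⟨c, hle, hc⟩ := (hsmall.and self_mem_nhdsWithin).exists
  exact ⟨c, hc, fun i j k hjk => hle j k hjk i⟩

theorem isPeriodicPt_of_dense_orbit {X : Type*} [TopologicalSpace X] [T2Space X] {f : X → X}
    (hf : Continuous f) {z : X} (hz : Dense (Set.range fun i : ℕ => f^[i] z)) {p : ℕ}
    (hp : Function.IsPeriodicPt f p z) (w : X) : Function.IsPeriodicPt f p w := by
  have hid : f^[p] = id := by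
    refine (hf.iterate p).ext_on hz continuous_id ?_
    rintro _ ⟨i, rfl⟩
    exact hp.apply_iterate i
  exact congrFun hid w

theorem distalPair_iterate {X : Type*} [PseudoMetricSpace X] {f : X → X} {K : Set X}
    (hK : IsCompact K) (hf : ContinuousOn f K) (hmaps : Set.MapsTo f K K) {p : ℕ}
    (hp : ∀ z ∈ K, 0 < dist z (f^[p] z)) {y : X} (hy : y ∈ K) :
    DistalPair f y (f^[p] y) := by
  obtain ⟨c, hc, hle⟩ : ∃ c : ℝ, 0 < c ∧ ∀ z ∈ K, c ≤ dist z (f^[p] z) :=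
    hK.exists_forall_le'
      (continuous_dist.comp_continuousOn (continuousOn_id.prodMk (hf.iterate hmaps p))) hp
  refine ⟨c, hc, fun i => ?_⟩
  rw [(Function.Commute.iterate_iterate_self f i p).eq y]
  exact hle _ (hmaps.iterate i hy)

theorem orbit_distal_of_minimal_general {X : Type*} [MetricSpace X] {f : X → X} {K : Set X}
    (hK : IsCompact K) (hf : ContinuousOn f K) (hmaps : Set.MapsTo f K K) {x : X} (hx : x ∈ K)
    (hper : ∀ p : ℕ, ∀ z ∈ K, Function.IsPeriodicPt f p z → Function.IsPeriodicPt f p x) :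
    DistalSet f (Set.range fun i : ℕ => f^[i] x) := by
  refine .of_pairwise ?_
  rintro _ ⟨a, rfl⟩ _ ⟨b, rfl⟩ hne
  wlog hab : a ≤ b generalizing a b
  · exact (this b a hne.symm (le_of_not_ge hab)).symm
  obtain ⟨p, rfl⟩ := Nat.exists_eq_add_of_le' hab
  simp only [Function.iterate_add_apply] at hne ⊢
  have hmoved : ∀ z ∈ K, 0 < dist z (f^[p] z) := fun z hz =>
    dist_pos.2 fun hzp => hne ((hper p z hz hzp.symm).apply_iterate a).symm
  exact distalPair_iterate hK hf hmaps hmoved (hmaps.iterate a hx)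

/-- if `f` is minimal, then every forward orbit is a distal set for `f`. -/
theorem orbit_distal_of_minimal {X : Type*} [MetricSpace X] [CompactSpace X]
    (f : X → X) (hf : Continuous f)
    (hmin : ∀ x : X, closure (Set.range fun i : ℕ => f^[i] x) = Set.univ) :
    ∀ x : X, DistalSet f (Set.range fun i : ℕ => f^[i] x) := fun x =>
  orbit_distal_of_minimal_general isCompact_univ hf.continuousOn (Set.mapsTo_univ f _)
    (Set.mem_univ x) fun _ z _ hz =>
      isPeriodicPt_of_dense_orbit hf (dense_iff_closure_eq.2 (hmin z)) hz x
end
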